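/- arXiv:1505.06354 — 2 statements merged into one kernel-verified Lean document; each statement's English description precedes it below -/
import Mathlib

section
/- Let y ∈ ℝ^N and let X be an N×p real matrix of full column rank p < N, partitioned row-wise into K blocks X_k ∈ ℝ^{n_k×p} with corresponding response blocks y_k ∈ ℝ^{n_k}. For each k, let β̂_{n_k,k} = (X_kᵀX_k)⁻ X_kᵀ y_k, where (X_kᵀX_k)⁻ is any generalized inverse of X_kᵀX_k. Then the combined estimator β̂ = (Σ_{k=1}^K X_kᵀX_k)⁻¹ Σ_{k=1}^K X_kᵀX_k β̂_{n_k,k} and the sum of squared errors SSE = Σ_{k=1}^K y_kᵀy_k − (Σ_{k=1}^K X_kᵀX_k β̂_{n_k,k})ᵀ (Σ_{k=1}^K X_kᵀX_k)⁻¹ (Σ_{k=1}^K X_kᵀX_k β̂_{n_k,k}) are invariant to the choices of generalized inverses; in fact β̂ = (XᵀX)⁻¹Xᵀy and SSE = yᵀy − yᵀX(XᵀX)⁻¹Xᵀy. -/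
open Matrix

/-!
A generalized inverse `G` of a Gram matrix `AᴴA` satisfies `AᴴA G Aᴴ = Aᴴ`, because `B AᴴA = 0`
forces `B Aᴴ = 0`. So every block satisfies its normal equations `AₖᴴAₖ β̂ₖ = Aₖᴴyₖ`, whichever
generalized inverse produced `β̂ₖ`, and summing over the blocks leaves only `Aᴴy`. In the pooled
problem the matrix `A S Aᴴ` is the same for every generalized inverse `S` of `AᴴA`, so the fitted
values and the SSE are determined even when `A` is rank deficient; full column rank makes `A`
injective and thereby determines the estimator itself.
-/

section GeneralizedInverse

variable {m n R : Type*} [Fintype m] [Fintype n]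

/-- `G` is a generalized inverse (g-inverse, or inner inverse) of `A`, a substitute for `A⁻¹` when
`A` is singular: only the first of the four Penrose conditions is required, so `G` need not be
unique. -/
def IsGeneralizedInverse [NonUnitalSemiring R] (A : Matrix m n R) (G : Matrix n m R) : Prop :=
  A * G * A = A

theorem isGeneralizedInverse_inv [DecidableEq n] [CommRing R] {A : Matrix n n R} (hA : IsUnit A) :
    IsGeneralizedInverse A A⁻¹ := by
  rw [IsGeneralizedInverse, mul_nonsing_inv A ((isUnit_iff_isUnit_det A).mp hA), Matrix.one_mul]

namespace IsGeneralizedInverse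

variable [Ring R] [PartialOrder R] [StarRing R] [StarOrderedRing R] [NoZeroDivisors R]
  {A : Matrix m n R} {G G' : Matrix n n R}

theorem conjTranspose_mul_self_mul_mul_conjTranspose (hG : IsGeneralizedInverse (Aᴴ * A) G) :
    Aᴴ * A * G * Aᴴ = Aᴴ := by
  classical
  have hzero : (Aᴴ * A * G - 1) * (Aᴴ * A) = 0 := by
    rw [Matrix.sub_mul, Matrix.one_mul, hG, sub_self]
  rwa [mul_conjTranspose_mul_self_eq_zero, Matrix.sub_mul, Matrix.one_mul, sub_eq_zero] at hzero

theorem mul_mul_conjTranspose_mul_self (hG : IsGeneralizedInverse (Aᴴ * A) G) :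
    A * (G * (Aᴴ * A)) = A := by
  classical
  have hzero : Aᴴ * A * (G * (Aᴴ * A) - 1) = 0 := by
    rw [Matrix.mul_sub, Matrix.mul_one, ← Matrix.mul_assoc, hG, sub_self]
  rwa [conjTranspose_mul_self_mul_eq_zero, Matrix.mul_sub, Matrix.mul_one, sub_eq_zero] at hzero

theorem mul_mul_conjTranspose_eq (hG : IsGeneralizedInverse (Aᴴ * A) G)
    (hG' : IsGeneralizedInverse (Aᴴ * A) G') : A * G * Aᴴ = A * G' * Aᴴ :=
  calc
    A * G * Aᴴ = A * G * (Aᴴ * A * G' * Aᴴ) := by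
      rw [hG'.conjTranspose_mul_self_mul_mul_conjTranspose]
    _ = A * (G * (Aᴴ * A)) * G' * Aᴴ := by simp only [Matrix.mul_assoc]
    _ = A * G' * Aᴴ := by rw [hG.mul_mul_conjTranspose_mul_self]

theorem normal_equations (hG : IsGeneralizedInverse (Aᴴ * A) G) (y : m → R) :
    (Aᴴ * A) *ᵥ (G *ᵥ (Aᴴ *ᵥ y)) = Aᴴ *ᵥ y := by
  rw [mulVec_mulVec, mulVec_mulVec, hG.conjTranspose_mul_self_mul_mul_conjTranspose]

theorem fitted_values_eq (hG : IsGeneralizedInverse (Aᴴ * A) G)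
    (hG' : IsGeneralizedInverse (Aᴴ * A) G') (y : m → R) :
    A *ᵥ (G *ᵥ (Aᴴ *ᵥ y)) = A *ᵥ (G' *ᵥ (Aᴴ *ᵥ y)) := by
  simp only [mulVec_mulVec, ← Matrix.mul_assoc, hG.mul_mul_conjTranspose_eq hG']

end IsGeneralizedInverse

end GeneralizedInverse

section Blocks

variable {κ l n R : Type*} {m : κ → Type*} [Fintype κ] [∀ k, Fintype (m k)]
  [NonUnitalNonAssocSemiring R] [Star R]

theorem sum_star_dotProduct_blocks {u v : (Σ k, m k) → R} {ub vb : ∀ k, m k → R}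
    (hu : ∀ k i, u ⟨k, i⟩ = ub k i) (hv : ∀ k i, v ⟨k, i⟩ = vb k i) :
    ∑ k, star (ub k) ⬝ᵥ vb k = star u ⬝ᵥ v := by
  simp only [dotProduct, Pi.star_apply, Fintype.sum_sigma, hu, hv]

theorem sum_conjTranspose_mulVec_blocks {A : Matrix (Σ k, m k) l R} {Ab : ∀ k, Matrix (m k) l R}
    {v : (Σ k, m k) → R} {vb : ∀ k, m k → R} (hA : ∀ k i j, A ⟨k, i⟩ j = Ab k i j)
    (hv : ∀ k i, v ⟨k, i⟩ = vb k i) :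
    ∑ k, (Ab k)ᴴ *ᵥ vb k = Aᴴ *ᵥ v := by
  ext j
  rw [Finset.sum_apply]
  exact sum_star_dotProduct_blocks (hA · · j) hv

theorem sum_conjTranspose_mul_blocks {A : Matrix (Σ k, m k) l R} {B : Matrix (Σ k, m k) n R}
    {Ab : ∀ k, Matrix (m k) l R} {Bb : ∀ k, Matrix (m k) n R}
    (hA : ∀ k i j, A ⟨k, i⟩ j = Ab k i j) (hB : ∀ k i j, B ⟨k, i⟩ j = Bb k i j) :
    ∑ k, (Ab k)ᴴ * Bb k = Aᴴ * B := by
  ext i j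
  rw [Matrix.sum_apply]
  exact sum_star_dotProduct_blocks (hA · · i) (hB · · j)

end Blocks

section FullColumnRank

variable {m n R : Type*} [Fintype n] [Field R] {A : Matrix m n R}

theorem mulVec_injective_of_rank_eq_card (hA : A.rank = Fintype.card n) :
    Function.Injective A.mulVec := by
  rw [mulVec_injective_iff, linearIndependent_iff_card_eq_finrank_span, ← hA]
  exact A.rank_eq_finrank_span_cols

theorem isUnit_conjTranspose_mul_self_of_rank_eq_card [Fintype m] [DecidableEq n]
    [PartialOrder R] [StarRing R] [StarOrderedRing R] (hA : A.rank = Fintype.card n) :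
    IsUnit (Aᴴ * A) :=
  mulVec_injective_iff_isUnit.mp <|
    mulVec_injective_of_rank_eq_card <| (rank_conjTranspose_mul_self A).trans hA

end FullColumnRank

theorem star_conjTranspose_mulVec_dotProduct {m n R : Type*} [Fintype m] [Fintype n]
    [NonUnitalSemiring R] [StarRing R] (A : Matrix m n R) (y : m → R) (w : n → R) :
    star (Aᴴ *ᵥ y) ⬝ᵥ w = star y ⬝ᵥ (A *ᵥ w) := by
  rw [star_mulVec, conjTranspose_conjTranspose, dotProduct_mulVec]

theorem stmt0_general {κ p R : Type*} [Fintype κ] [Fintype p] [Ring R] [PartialOrder R]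
    [StarRing R] [StarOrderedRing R] [NoZeroDivisors R] {n : κ → Type*} [∀ k, Fintype (n k)]
    (Xb : ∀ k, Matrix (n k) p R) (yb : ∀ k, n k → R)
    (X : Matrix (Σ k, n k) p R) (y : (Σ k, n k) → R)
    (hX : ∀ k i j, X ⟨k, i⟩ j = Xb k i j) (hy : ∀ k i, y ⟨k, i⟩ = yb k i)
    (G : κ → Matrix p p R) (hG : ∀ k, IsGeneralizedInverse ((Xb k)ᴴ * Xb k) (G k))
    {S T : Matrix p p R} (hS : IsGeneralizedInverse (∑ k, (Xb k)ᴴ * Xb k) S)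
    (hT : IsGeneralizedInverse (Xᴴ * X) T) :
    X *ᵥ (S *ᵥ ∑ k, ((Xb k)ᴴ * Xb k) *ᵥ (G k *ᵥ ((Xb k)ᴴ *ᵥ yb k))) =
      X *ᵥ (T *ᵥ (Xᴴ *ᵥ y)) ∧
    (∑ k, star (yb k) ⬝ᵥ yb k) -
        star (∑ k, ((Xb k)ᴴ * Xb k) *ᵥ (G k *ᵥ ((Xb k)ᴴ *ᵥ yb k))) ⬝ᵥ
          (S *ᵥ ∑ k, ((Xb k)ᴴ * Xb k) *ᵥ (G k *ᵥ ((Xb k)ᴴ *ᵥ yb k))) =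
      star y ⬝ᵥ y - star y ⬝ᵥ (X *ᵥ (T *ᵥ (Xᴴ *ᵥ y))) := by
  have hgram : ∑ k, (Xb k)ᴴ * Xb k = Xᴴ * X := sum_conjTranspose_mul_blocks hX hX
  have hpooled : ∑ k, ((Xb k)ᴴ * Xb k) *ᵥ (G k *ᵥ ((Xb k)ᴴ *ᵥ yb k)) = Xᴴ *ᵥ y := by
    simp only [(hG _).normal_equations, sum_conjTranspose_mulVec_blocks hX hy]
  have hfit : X *ᵥ (S *ᵥ (Xᴴ *ᵥ y)) = X *ᵥ (T *ᵥ (Xᴴ *ᵥ y)) :=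
    (hgram ▸ hS).fitted_values_eq hT y
  rw [hpooled, sum_star_dotProduct_blocks hy hy, star_conjTranspose_mulVec_dotProduct, hfit]
  exact ⟨rfl, rfl⟩

/-- Divide-and-conquer least squares: with `X` the row-wise stacking of the blocks `Xb k`
(of full column rank `p < N`) and `y` the stacking of the `yb k`, the combined estimator
`β̂ = (Σ XᵀₖXₖ)⁻¹ Σ XᵀₖXₖ β̂ₖ` with subset estimators `β̂ₖ = (XᵀₖXₖ)⁻ Xᵀₖ yₖ` and the
corresponding SSE are invariant to the choices of generalized inverses `G k`;
indeed `β̂ = (XᵀX)⁻¹Xᵀy` and `SSE = yᵀy − yᵀX(XᵀX)⁻¹Xᵀy`. -/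
theorem stmt0 {K p : ℕ} (n : Fin K → ℕ)
    (Xb : ∀ k, Matrix (Fin (n k)) (Fin p) ℝ)
    (yb : ∀ k, Fin (n k) → ℝ)
    (X : Matrix ((k : Fin K) × Fin (n k)) (Fin p) ℝ)
    (y : (k : Fin K) × Fin (n k) → ℝ)
    (hX : ∀ k i j, X ⟨k, i⟩ j = Xb k i j)
    (hy : ∀ k i, y ⟨k, i⟩ = yb k i)
    (hrank : X.rank = p)
    (hp : p < ∑ k, n k)
    (G : ∀ _ : Fin K, Matrix (Fin p) (Fin p) ℝ)
    (hG : ∀ k, ((Xb k)ᵀ * Xb k) * G k * ((Xb k)ᵀ * Xb k) = (Xb k)ᵀ * Xb k) :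
    (∑ k, (Xb k)ᵀ * Xb k)⁻¹ *ᵥ
        (∑ k, ((Xb k)ᵀ * Xb k) *ᵥ (G k *ᵥ ((Xb k)ᵀ *ᵥ yb k))) =
      (Xᵀ * X)⁻¹ *ᵥ (Xᵀ *ᵥ y) ∧
    (∑ k, yb k ⬝ᵥ yb k) -
        (∑ k, ((Xb k)ᵀ * Xb k) *ᵥ (G k *ᵥ ((Xb k)ᵀ *ᵥ yb k))) ⬝ᵥ
          ((∑ k, (Xb k)ᵀ * Xb k)⁻¹ *ᵥ
            (∑ k, ((Xb k)ᵀ * Xb k) *ᵥ (G k *ᵥ ((Xb k)ᵀ *ᵥ yb k)))) =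
      y ⬝ᵥ y - y ⬝ᵥ (X *ᵥ ((Xᵀ * X)⁻¹ *ᵥ (Xᵀ *ᵥ y))) := by
  simp only [← conjTranspose_eq_transpose_of_trivial] at hG ⊢
  have hcard : X.rank = Fintype.card (Fin p) := by rw [hrank, Fintype.card_fin]
  have hunit : IsUnit (Xᴴ * X) := isUnit_conjTranspose_mul_self_of_rank_eq_card hcard
  have hgram : ∑ k, (Xb k)ᴴ * Xb k = Xᴴ * X := sum_conjTranspose_mul_blocks hX hX
  obtain ⟨hfit, hSSE⟩ := stmt0_general Xb yb X y hX hy G hG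
    (isGeneralizedInverse_inv (hgram ▸ hunit)) (isGeneralizedInverse_inv hunit)
  exact ⟨mulVec_injective_of_rank_eq_card hcard hfit, by simpa only [star_trivial] using hSSE⟩
end

section
/- Let λ > 0, V_0 = λ I_p, β̂_0 = 0, and for k = 1,…,κ−1 define V_k = V_{k−1} + X_kᵀX_k and β̂_k = V_k⁻¹ (X_kᵀ y_k + V_{k−1} β̂_{k−1}) (ridge-regularized online updates). Assume V_κ − λ I_p = Σ_{ℓ=1}^κ X_ℓᵀX_ℓ is invertible, where V_κ = V_{κ−1} + X_κᵀX_κ. Then the bias-corrected estimator β̂_κ = (X_κᵀX_κ + V_{κ−1} − λ I_p)⁻¹ (X_κᵀ y_κ + W_{κ−1}), where W_{κ−1} = Σ_{ℓ=1}^{κ−1} X_ℓᵀ y_ℓ, equals the unregularized least squares estimator (Σ_{ℓ=1}^κ X_ℓᵀX_ℓ)⁻¹ Σ_{ℓ=1}^κ X_ℓᵀ y_ℓ based on the cumulative data; moreover, with SSE_0 = 0, SSE_k = SSE_{k−1} + y_kᵀy_k + β̂_{k−1}ᵀ V_{k−1} β̂_{k−1} − β̂_kᵀ V_k β̂_k for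 k < κ and SSE_κ = SSE_{κ−1} + y_κᵀy_κ + β̂_{κ−1}ᵀ V_{κ−1} β̂_{κ−1} − β̂_κᵀ (V_κ − λ I_p) β̂_κ, one has SSE_κ = Σ_{ℓ=1}^κ y_ℓᵀy_ℓ − β̂_κᵀ (Σ_{ℓ=1}^κ X_ℓᵀX_ℓ) β̂_κ, the unregularized residual sum of squares. -/
open Matrix

/-
Each matrix update adds `XᵀₖXₖ` to the initial value, so subtracting that initial value at time `κ`
leaves exactly the Gram matrix of the cumulative data, and the equation for the corrected estimator
is the unregularized normal equation. In the recursion for `SSE` the term `bₖᵀVₖbₖ` is subtracted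
at step `k` and added back at step `k + 1`, whatever the vector `bₖ` is; the sum telescopes, and
only the quadratic form of the last step, taken with the corrected matrix, survives.
-/

section Recursions

variable {M : Type*}

theorem sum_Icc_one_pred_add [AddCommMonoid M] (f : ℕ → M) {n : ℕ} (hn : 1 ≤ n) :
    ∑ k ∈ Finset.Icc 1 (n - 1), f k + f n = ∑ k ∈ Finset.Icc 1 n, f k := by
  obtain ⟨m, rfl⟩ := Nat.exists_eq_add_of_le' hn
  exact (Finset.sum_Icc_succ_top (Nat.le_add_left 1 m) f).symm

theorem eq_zero_add_sum_of_eq_pred_add [AddCommMonoid M] {u f : ℕ → M} {n : ℕ}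
    (hu : ∀ k, 1 ≤ k → k ≤ n → u k = u (k - 1) + f k) :
    u n = u 0 + ∑ k ∈ Finset.Icc 1 n, f k := by
  induction n with
  | zero => simp
  | succ n ih =>
    rw [hu (n + 1) (Nat.le_add_left 1 n) le_rfl, Nat.add_sub_cancel,
      ih fun k h1 hk => hu k h1 (Nat.le_succ_of_le hk), add_assoc,
      Finset.sum_Icc_succ_top (Nat.le_add_left 1 n)]

theorem add_eq_add_sum_of_eq_pred_add_add_sub [AddCommGroup M] {s q f : ℕ → M} {n : ℕ}
    (hs : ∀ k, 1 ≤ k → k ≤ n → s k = s (k - 1) + f k + q (k - 1) - q k) :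
    s n + q n = s 0 + q 0 + ∑ k ∈ Finset.Icc 1 n, f k := by
  refine eq_zero_add_sum_of_eq_pred_add (u := fun k => s k + q k) fun k h1 hk => ?_
  rw [hs k h1 hk]
  abel

end Recursions

section OnlineUpdating

variable {R ι : Type*} {m : ℕ → Type*} [∀ k, Fintype (m k)] {X : ∀ k, Matrix (m k) ι R}
  {y : ∀ k, m k → R} {n : ℕ} {V : ℕ → Matrix ι ι R} {b : ℕ → ι → R} {SSE : ℕ → R}

theorem sub_initial_eq_sum_gram [NonUnitalNonAssocRing R]
    (hV : ∀ k, 1 ≤ k → k ≤ n → V k = V (k - 1) + (X k)ᵀ * X k) :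
    V n - V 0 = ∑ ℓ ∈ Finset.Icc 1 n, (X ℓ)ᵀ * X ℓ := by
  rw [eq_zero_add_sum_of_eq_pred_add hV, add_sub_cancel_left]

theorem sse_add_quadratic_eq_sum [NonUnitalNonAssocRing R] [Fintype ι]
    (hb0 : b 0 = 0) (hSSE0 : SSE 0 = 0)
    (hSSE : ∀ k, 1 ≤ k → k ≤ n →
      SSE k = SSE (k - 1) + y k ⬝ᵥ y k + b (k - 1) ⬝ᵥ (V (k - 1) *ᵥ b (k - 1))
        - b k ⬝ᵥ (V k *ᵥ b k)) :
    SSE n + b n ⬝ᵥ (V n *ᵥ b n) = ∑ ℓ ∈ Finset.Icc 1 n, y ℓ ⬝ᵥ y ℓ := by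
  have htel := add_eq_add_sum_of_eq_pred_add_add_sub (q := fun k => b k ⬝ᵥ (V k *ᵥ b k)) hSSE
  simpa only [hb0, hSSE0, zero_dotProduct, zero_add] using htel

theorem eq_inv_mulVec_iff [CommRing R] [Fintype ι] [DecidableEq ι] {A : Matrix ι ι R}
    (hA : IsUnit A) {v w : ι → R} : v = A⁻¹ *ᵥ w ↔ A *ᵥ v = w := by
  have hdet := (isUnit_iff_isUnit_det A).mp hA
  constructor
  · rintro rfl
    rw [mulVec_mulVec, mul_nonsing_inv A hdet, one_mulVec]
  · rintro rfl
    rw [mulVec_mulVec, nonsing_inv_mul A hdet, one_mulVec]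

theorem stmt5_general [CommRing R] [Fintype ι] [DecidableEq ι] {κ : ℕ} {β : ι → R}
    (hκ : 1 ≤ κ) (hb0 : b 0 = 0) (hSSE0 : SSE 0 = 0)
    (hV : ∀ k, 1 ≤ k → k ≤ κ → V k = V (k - 1) + (X k)ᵀ * X k)
    (hinv : IsUnit (V κ - V 0))
    (hβ : (V κ - V 0) *ᵥ β =
      (X κ)ᵀ *ᵥ y κ + ∑ ℓ ∈ Finset.Icc 1 (κ - 1), (X ℓ)ᵀ *ᵥ y ℓ)
    (hSSE : ∀ k, 1 ≤ k → k < κ →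
      SSE k = SSE (k - 1) + y k ⬝ᵥ y k + b (k - 1) ⬝ᵥ (V (k - 1) *ᵥ b (k - 1))
        - b k ⬝ᵥ (V k *ᵥ b k))
    (hSSEκ : SSE κ = SSE (κ - 1) + y κ ⬝ᵥ y κ + b (κ - 1) ⬝ᵥ (V (κ - 1) *ᵥ b (κ - 1))
      - β ⬝ᵥ ((V κ - V 0) *ᵥ β)) :
    β = (∑ ℓ ∈ Finset.Icc 1 κ, (X ℓ)ᵀ * X ℓ)⁻¹ *ᵥ ∑ ℓ ∈ Finset.Icc 1 κ, (X ℓ)ᵀ *ᵥ y ℓ ∧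
    SSE κ = (∑ ℓ ∈ Finset.Icc 1 κ, y ℓ ⬝ᵥ y ℓ)
      - β ⬝ᵥ ((∑ ℓ ∈ Finset.Icc 1 κ, (X ℓ)ᵀ * X ℓ) *ᵥ β) := by
  rw [sub_initial_eq_sum_gram hV] at hinv hβ hSSEκ
  constructor
  · rw [eq_inv_mulVec_iff hinv, hβ, add_comm,
      sum_Icc_one_pred_add (fun ℓ => (X ℓ)ᵀ *ᵥ y ℓ) hκ]
  · have hprev : SSE (κ - 1) + b (κ - 1) ⬝ᵥ (V (κ - 1) *ᵥ b (κ - 1)) =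
        ∑ ℓ ∈ Finset.Icc 1 (κ - 1), y ℓ ⬝ᵥ y ℓ :=
      sse_add_quadratic_eq_sum hb0 hSSE0 fun k h1 hk => hSSE k h1 (Nat.lt_of_le_pred hκ hk)
    rw [hSSEκ, ← sum_Icc_one_pred_add (fun ℓ => y ℓ ⬝ᵥ y ℓ) hκ, ← hprev]
    abel

end OnlineUpdating

/-- Ridge-regularized online updating with bias removal at accumulation point `κ`:
starting from `V 0 = λ Iₚ`, `b 0 = 0`, updating `V k = V (k−1) + XᵀₖXₖ`,
`b k = V k⁻¹ (Xᵀₖyₖ + V (k−1) b (k−1))` for `1 ≤ k < κ`, and defining the bias-corrected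
estimator `b κ = (XᵀκXκ + V (κ−1) − λ Iₚ)⁻¹ (Xᵀκyκ + W (κ−1))`, one recovers the
unregularized least squares estimator and the unregularized residual sum of squares. -/
theorem stmt5 {p : ℕ} (n : ℕ → ℕ)
    (X : ∀ k, Matrix (Fin (n k)) (Fin p) ℝ)
    (y : ∀ k, Fin (n k) → ℝ)
    (lam : ℝ) (hlam : 0 < lam) (κ : ℕ) (hκ : 1 ≤ κ)
    (V : ℕ → Matrix (Fin p) (Fin p) ℝ) (b : ℕ → Fin p → ℝ) (SSE : ℕ → ℝ)
    (hV0 : V 0 = lam • (1 : Matrix (Fin p) (Fin p) ℝ))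
    (hb0 : b 0 = 0) (hSSE0 : SSE 0 = 0)
    (hV : ∀ k, 1 ≤ k → k ≤ κ → V k = V (k - 1) + (X k)ᵀ * X k)
    (hb : ∀ k, 1 ≤ k → k < κ →
      b k = (V k)⁻¹ *ᵥ ((X k)ᵀ *ᵥ y k + V (k - 1) *ᵥ b (k - 1)))
    (hinv : IsUnit (V κ - lam • (1 : Matrix (Fin p) (Fin p) ℝ)))
    (hbκ : b κ = ((X κ)ᵀ * X κ + V (κ - 1) - lam • (1 : Matrix (Fin p) (Fin p) ℝ))⁻¹ *ᵥ
      ((X κ)ᵀ *ᵥ y κ + ∑ ℓ ∈ Finset.Icc 1 (κ - 1), (X ℓ)ᵀ *ᵥ y ℓ))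
    (hSSE : ∀ k, 1 ≤ k → k < κ →
      SSE k = SSE (k - 1) + y k ⬝ᵥ y k + b (k - 1) ⬝ᵥ (V (k - 1) *ᵥ b (k - 1))
        - b k ⬝ᵥ (V k *ᵥ b k))
    (hSSEκ : SSE κ = SSE (κ - 1) + y κ ⬝ᵥ y κ + b (κ - 1) ⬝ᵥ (V (κ - 1) *ᵥ b (κ - 1))
      - b κ ⬝ᵥ ((V κ - lam • (1 : Matrix (Fin p) (Fin p) ℝ)) *ᵥ b κ)) :
    b κ = (∑ ℓ ∈ Finset.Icc 1 κ, (X ℓ)ᵀ * X ℓ)⁻¹ *ᵥ ∑ ℓ ∈ Finset.Icc 1 κ, (X ℓ)ᵀ *ᵥ y ℓ ∧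
    SSE κ = (∑ ℓ ∈ Finset.Icc 1 κ, y ℓ ⬝ᵥ y ℓ)
      - b κ ⬝ᵥ ((∑ ℓ ∈ Finset.Icc 1 κ, (X ℓ)ᵀ * X ℓ) *ᵥ b κ) := by
  rw [← hV0] at hinv hbκ hSSEκ
  rw [add_comm _ (V (κ - 1)), ← hV κ hκ le_rfl] at hbκ
  exact stmt5_general hκ hb0 hSSE0 hV hinv ((eq_inv_mulVec_iff hinv).mp hbκ) hSSE hSSEκ
end
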